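/- arXiv:2105.00541 — 2 statements merged into one kernel-verified Lean document; each statement's English description precedes it below -/
import Mathlib

section
/- Let V = (V_1,…,V_k) be subsets of {1,…,n} such that the column matroid M(V) of M_V is a positroid of rank k and M_V is a minimal representation, i.e., |∪_{i∈T} V_i| ≥ max_{i∈T}|V_i| + |T| − 1 for every nonempty T ⊆ {1,…,k}. Then in ℝ[x] the radical of the ideal generated by the product ∏_{a=1}^{n} Δ_{I_a}(x) of the Grassmann necklace minors equals the radical of the ideal generated by the product ∏_{a=1}^{n} Δ_{I*_a}(x) of the reverse Grassmann necklace minors. -/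
open MvPolynomial

/-- The polynomial ring `ℝ[x_{i,j}]` in `k·n` independent variables. -/
abbrev PR (k n : ℕ) : Type := MvPolynomial (Fin k × Fin n) ℝ

/-- Its field of fractions `K`. -/
abbrev FF (k n : ℕ) : Type := FractionRing (PR k n)

/-- The variable-valued matrix `M_V` with polynomial entries: the `(i,j)` entry is
`x_{i,j}` if `j ∈ V_i` and `0` otherwise. -/
noncomputable def MVpoly (k n : ℕ) (V : Fin k → Finset (Fin n)) :
    Matrix (Fin k) (Fin n) (PR k n) :=
  Matrix.of fun i j => if j ∈ V i then X (i, j) else 0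

/-- The variable-valued matrix `M_V` over the field `K`. -/
noncomputable def MV (k n : ℕ) (V : Fin k → Finset (Fin n)) :
    Matrix (Fin k) (Fin n) (FF k n) :=
  Matrix.of fun i j => algebraMap (PR k n) (FF k n) (MVpoly k n V i j)

/-- Linear independence over `F` of the columns of a matrix indexed by a set `S`. -/
def ColsIndep {k n : ℕ} {F : Type*} [Field F] (M : Matrix (Fin k) (Fin n) F)
    (S : Finset (Fin n)) : Prop :=
  LinearIndependent F (fun j : {x : Fin n // x ∈ S} => fun i : Fin k => M i (j : Fin n))

/-- The minor `Δ_S(x) ∈ ℝ[x]` of `M_V` on a `k`-element set `S` of columns (and `0`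
if `S` does not have `k` elements); well defined up to the sign of the chosen
enumeration of `S`. -/
noncomputable def minorF (k n : ℕ) (V : Fin k → Finset (Fin n))
    (S : Finset (Fin n)) : PR k n :=
  if h : S.card = k then
    ((MVpoly k n V).submatrix id
      (fun i : Fin k => ((S.equivFin.symm (Fin.cast h.symm i)) : Fin n))).det
  else 0

/-- The position of `x` in the cyclic order `<ₐ` starting at `a`. -/
def keyF (n : ℕ) (a x : Fin n) : ℕ := ((x : ℕ) + n - (a : ℕ)) % n

/-- The Gale order `≤ₐ` associated to the cyclic shift `<ₐ`:  `S ≤ₐ T` iff the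
sorted lists of positions agree in length and are pointwise `≤`. -/
def GaleLEat (n : ℕ) (a : Fin n) (S T : Finset (Fin n)) : Prop :=
  List.Forall₂ (· ≤ ·)
    ((S.image (keyF n a)).sort (· ≤ ·)) ((T.image (keyF n a)).sort (· ≤ ·))

/-- `S` is a basis of columns of `M_V`: it has `k` elements and its maximal minor is
nonzero. -/
def IsBasisF (k n : ℕ) (V : Fin k → Finset (Fin n)) (S : Finset (Fin n)) : Prop :=
  S.card = k ∧ minorF k n V S ≠ 0

/-- `S` is the Grassmann necklace element `I_a`: the `≤ₐ`-least basis. -/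
def NecklaceAt (k n : ℕ) (V : Fin k → Finset (Fin n)) (a : Fin n)
    (S : Finset (Fin n)) : Prop :=
  IsBasisF k n V S ∧ ∀ T : Finset (Fin n), IsBasisF k n V T → GaleLEat n a S T

/-- `S` is the reverse Grassmann necklace element `I*_a`: the `≤ₐ`-greatest basis. -/
def CoNecklaceAt (k n : ℕ) (V : Fin k → Finset (Fin n)) (a : Fin n)
    (S : Finset (Fin n)) : Prop :=
  IsBasisF k n V S ∧ ∀ T : Finset (Fin n), IsBasisF k n V T → GaleLEat n a T S

/-- The column matroid `M(V)` is a positroid of rank `k`: some real `k×n` matrix of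
rank `k` with all (column-ordered) `k×k` minors nonnegative has exactly the same
linearly independent column sets as `M_V`. -/
def IsPositroidRep (k n : ℕ) (V : Fin k → Finset (Fin n)) : Prop :=
  ∃ A : Matrix (Fin k) (Fin n) ℝ, A.rank = k ∧
    (∀ f : Fin k → Fin n, StrictMono f → 0 ≤ (A.submatrix id f).det) ∧
    (∀ S : Finset (Fin n), ColsIndep A S ↔ ColsIndep (MV k n V) S)

/-- columns after a ring hom -/
noncomputable def colF {k n : ℕ} {F : Type*} [Field F] (φ : PR k n →+* F)
    (V : Fin k → Finset (Fin n)) (x : Fin n) : Fin k → F :=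
  fun i => φ (MVpoly k n V i x)

lemma minor_iff {k n : ℕ} {F : Type*} [Field F] (φ : PR k n →+* F)
    (V : Fin k → Finset (Fin n)) (S : Finset (Fin n)) (h : S.card = k) :
    φ (minorF k n V S) ≠ 0 ↔ LinearIndepOn F (colF φ V) (S : Set (Fin n)) := by
  unfold minorF
  rw [dif_pos h, RingHom.map_det, ← isUnit_iff_ne_zero, ← Matrix.isUnit_iff_isUnit_det,
    ← Matrix.linearIndependent_cols_iff_isUnit]
  let e : Fin k ≃ {x // x ∈ S} := (finCongr h.symm).trans S.equivFin.symm
  have := linearIndependent_equiv (R := F) e (f := fun x : {x // x ∈ S} => colF φ V x)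
  exact this

lemma extend_basis {k n : ℕ} {F : Type*} [Field F] (v : Fin n → Fin k → F)
    (hspan : Submodule.span F (Set.range v) = ⊤) (X : Finset (Fin n)) :
    ∃ T : Finset (Fin n), T.card = k ∧ LinearIndepOn F v (T : Set (Fin n)) ∧
      Module.finrank F (Submodule.span F (v '' (X : Set (Fin n)))) ≤ (T ∩ X).card := by
  classical
  obtain ⟨b, hbX, -, hXb, hb⟩ := exists_linearIndepOn_extension
    (linearIndepOn_empty F v) (Set.empty_subset (X : Set (Fin n)))
  obtain ⟨c, -, hbc, huc, hc⟩ := exists_linearIndepOn_extension hb (Set.subset_univ b)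
  refine ⟨c.toFinset, ?_, by simpa using hc, ?_⟩
  · have h1 : Submodule.span F (v '' c) = ⊤ := by
      rw [eq_top_iff, ← hspan, Submodule.span_le, ← Set.image_univ]
      exact huc
    have h2 := finrank_span_eq_card (R := F) hc
    rw [← Set.image_eq_range, h1, finrank_top, Module.finrank_fin_fun] at h2
    rw [Set.toFinset_card, h2]
  · calc _ ≤ Module.finrank F (Submodule.span F (v '' b)) :=
          Submodule.finrank_mono (Submodule.span_le.2 hXb)
      _ = Fintype.card b := by
          have h2 := finrank_span_eq_card (R := F) hb
          rwa [← Set.image_eq_range] at h2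
      _ = b.toFinset.card := (Set.toFinset_card b).symm
      _ ≤ _ := by
          apply Finset.card_le_card
          intro x hx
          rw [Set.mem_toFinset] at hx
          simp only [Finset.mem_inter, Set.mem_toFinset]
          exact ⟨hbc hx, by simpa using hbX hx⟩

lemma indep_card_le {k n : ℕ} {F : Type*} [Field F] (v : Fin n → Fin k → F)
    (I X : Finset (Fin n)) (hI : LinearIndepOn F v (I : Set (Fin n))) :
    (I ∩ X).card ≤ Module.finrank F (Submodule.span F (v '' (X : Set (Fin n)))) := by
  classical
  have h : LinearIndepOn F v ((I ∩ X : Finset (Fin n)) : Set (Fin n)) :=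
    hI.mono (by simp)
  have h2 := finrank_span_eq_card (R := F) h
  rw [← Set.image_eq_range] at h2
  have h3 : Fintype.card ((I ∩ X : Finset (Fin n)) : Set (Fin n)) = (I ∩ X).card :=
    Fintype.card_coe (I ∩ X)
  rw [← h3, ← h2]
  apply Submodule.finrank_mono
  apply Submodule.span_mono
  apply Set.image_mono
  simp

lemma greedy_span {k n : ℕ} {F : Type*} [Field F] (v : Fin n → Fin k → F)
    (key : Fin n → ℕ) (hkey : Function.Injective key) (B : Finset (Fin n))
    (hB : ∀ t, (B ∩ Finset.univ.filter (fun x => key x < t)).card =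
      Module.finrank F (Submodule.span F
        (v '' ((Finset.univ.filter (fun x => key x < t) : Finset (Fin n)) : Set (Fin n)))))
    (t : ℕ) : ∀ x, key x < t → v x ∈ Submodule.span F (v '' {y | y ∈ B ∧ key y < t}) := by
  classical
  induction t with
  | zero => intro x hx; omega
  | succ t ih =>
    have hmono : Submodule.span F (v '' {y | y ∈ B ∧ key y < t}) ≤
        Submodule.span F (v '' {y | y ∈ B ∧ key y < t + 1}) := by
      apply Submodule.span_mono
      apply Set.image_mono
      rintro y ⟨h1, h2⟩
      exact ⟨h1, by omega⟩
    intro x hx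
    by_cases hxB : x ∈ B
    · exact Submodule.subset_span ⟨x, ⟨hxB, hx⟩, rfl⟩
    by_cases hlt : key x < t
    · exact hmono (ih x hlt)
    have hxt : key x = t := by omega
    have hset : B ∩ Finset.univ.filter (fun x => key x < t + 1) =
        B ∩ Finset.univ.filter (fun x => key x < t) := by
      ext y
      simp only [Finset.mem_inter, Finset.mem_filter, Finset.mem_univ, true_and]
      constructor
      · rintro ⟨h1, h2⟩
        refine ⟨h1, ?_⟩
        rcases Nat.lt_succ_iff_lt_or_eq.1 h2 with h | h
        · exact h
        · exact absurd (hkey (h.trans hxt.symm) ▸ h1) hxB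
      · rintro ⟨h1, h2⟩
        exact ⟨h1, by omega⟩
    have h1 := hB t
    have h2 := hB (t + 1)
    rw [hset, h1] at h2
    have h3 := Submodule.eq_of_le_of_finrank_eq (Submodule.span_mono (Set.image_mono (by
      intro y hy
      simp only [Finset.coe_filter, Finset.mem_univ, true_and, Set.mem_ofPred_eq] at hy ⊢
      omega))) h2
    apply hmono
    have h4 : v x ∈ Submodule.span F
        (v '' ((Finset.univ.filter (fun x => key x < t + 1) : Finset (Fin n)) : Set (Fin n))) :=
      Submodule.subset_span ⟨x, by simpa using hx, rfl⟩
    rw [← h3] at h4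
    refine Submodule.span_le.2 ?_ h4
    rintro _ ⟨y, hy, rfl⟩
    exact ih y (by simpa using hy)

lemma greedy_indep {k n : ℕ} {F : Type*} [Field F] (v : Fin n → Fin k → F)
    (hspan : Submodule.span F (Set.range v) = ⊤)
    (key : Fin n → ℕ) (hkey : Function.Injective key) (B : Finset (Fin n)) (hBk : B.card = k)
    (hB : ∀ t, (B ∩ Finset.univ.filter (fun x => key x < t)).card =
      Module.finrank F (Submodule.span F
        (v '' ((Finset.univ.filter (fun x => key x < t) : Finset (Fin n)) : Set (Fin n))))) :
    LinearIndepOn F v (B : Set (Fin n)) := by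
  classical
  have hsp : Submodule.span F (v '' (B : Set (Fin n))) = ⊤ := by
    rw [eq_top_iff, ← hspan, Submodule.span_le]
    rintro _ ⟨x, rfl⟩
    have := greedy_span v key hkey B hB (key x + 1) x (by omega)
    refine Submodule.span_mono (Set.image_mono ?_) this
    rintro y ⟨h, -⟩
    exact h
  unfold LinearIndepOn
  apply linearIndependent_of_top_le_span_of_card_eq_finrank
  · rw [← Set.image_eq_range, hsp]
  · simp [hBk]

lemma main_prime {k n : ℕ} (V : Fin k → Finset (Fin n)) (I J : Fin n → Finset (Fin n))
    (f g : Fin n → Fin n → ℕ) (hg : ∀ b, Function.Injective (g b))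
    (hI : ∀ a, IsBasisF k n V (I a)) (hJ : ∀ b, IsBasisF k n V (J b))
    (hI' : ∀ a t T, IsBasisF k n V T →
      (T ∩ Finset.univ.filter (fun x => f a x < t)).card ≤
        (I a ∩ Finset.univ.filter (fun x => f a x < t)).card)
    (hJ' : ∀ a t T, IsBasisF k n V T →
      (T ∩ Finset.univ.filter (fun x => g a x < t)).card ≤
        (J a ∩ Finset.univ.filter (fun x => g a x < t)).card)
    (hfg : ∀ b t, ∃ a s, ∀ x, g b x < t ↔ f a x < s)
    (P : Ideal (PR k n)) (hP : P.IsPrime) (h : ∏ b, minorF k n V (J b) ∈ P) :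
    ∏ a, minorF k n V (I a) ∈ P := by
  classical
  by_contra hcon
  rw [hP.prod_mem_iff] at h hcon
  push Not at hcon
  obtain ⟨b, -, hb⟩ := h
  let φ : PR k n →+* FractionRing (PR k n ⧸ P) :=
    (algebraMap (PR k n ⧸ P) (FractionRing (PR k n ⧸ P))).comp (Ideal.Quotient.mk P)
  have hφ : ∀ p, φ p = 0 ↔ p ∈ P := by
    intro p
    simp only [φ, RingHom.comp_apply, FaithfulSMul.algebraMap_eq_zero_iff,
      Ideal.Quotient.eq_zero_iff_mem]
  have hind : ∀ a, LinearIndepOn _ (colF φ V) (I a : Set (Fin n)) := fun a =>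
    (minor_iff φ V (I a) (hI a).1).1 (fun h0 => hcon a (Finset.mem_univ _) ((hφ _).1 h0))
  have hspan : Submodule.span (FractionRing (PR k n ⧸ P)) (Set.range (colF φ V)) = ⊤ := by
    have h1 := hind b
    unfold LinearIndepOn at h1
    have h2 := h1.span_eq_top_of_card_eq_finrank' (by simp [(hI b).1])
    rw [eq_top_iff, ← h2]
    apply Submodule.span_mono
    rintro _ ⟨x, rfl⟩
    exact ⟨x, rfl⟩
  refine (minor_iff φ V (J b) (hJ b).1).2 ?_ ((hφ _).2 hb)
  refine greedy_indep _ hspan (g b) (hg b) (J b) (hJ b).1 ?_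
  intro t
  obtain ⟨a, s, has⟩ := hfg b t
  have hX : Finset.univ.filter (fun x => g b x < t) = Finset.univ.filter (fun x => f a x < s) := by
    ext x; simp [has x]
  have hJI := hI' a s (J b) (hJ b)
  have hIJ := hJ' b t (I a) (hI a)
  rw [hX] at hIJ ⊢
  rw [le_antisymm hJI hIJ]
  apply le_antisymm
  · exact indep_card_le _ _ _ (hind a)
  · obtain ⟨T, hTk, hT, hTX⟩ := extend_basis (colF φ V) hspan
      (Finset.univ.filter (fun x => f a x < s))
    refine hTX.trans (hI' a s T ⟨hTk, fun h0 => ?_⟩)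
    exact (minor_iff φ V T hTk).2 hT (by rw [h0, map_zero])

lemma forall2_countP (p : ℕ → Bool) (hp : ∀ x y, x ≤ y → p y = true → p x = true)
    (l m : List ℕ) (h : List.Forall₂ (· ≤ ·) l m) : m.countP p ≤ l.countP p := by
  induction h with
  | nil => simp
  | cons hab _ ih =>
    rw [List.countP_cons, List.countP_cons]
    have := hp _ _ hab
    split_ifs <;> simp_all <;> omega

lemma forall2_countP' (p : ℕ → Bool) (hp : ∀ x y, x ≤ y → p x = true → p y = true)
    (l m : List ℕ) (h : List.Forall₂ (· ≤ ·) l m) : l.countP p ≤ m.countP p := by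
  induction h with
  | nil => simp
  | cons hab _ ih =>
    rw [List.countP_cons, List.countP_cons]
    have := hp _ _ hab
    split_ifs <;> simp_all <;> omega

lemma sort_countP (S : Finset ℕ) (p : ℕ → Bool) :
    (S.sort (· ≤ ·)).countP p = (S.filter (fun x => p x = true)).card := by
  have h := Multiset.coe_countP (fun x => p x = true) (S.sort (· ≤ ·))
  rw [Finset.sort_eq, Multiset.countP_eq_card_filter] at h
  simp only [Bool.decide_eq_true] at h
  exact h.symm

lemma keyF_eq {n : ℕ} (a x : Fin n) :
    keyF n a x = if a.1 ≤ x.1 then x.1 - a.1 else x.1 + n - a.1 := by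
  unfold keyF
  have := a.2
  have := x.2
  split_ifs with h
  · rw [show x.1 + n - a.1 = (x.1 - a.1) + n by omega, Nat.add_mod_right, Nat.mod_eq_of_lt (by omega)]
  · rw [Nat.mod_eq_of_lt (by omega)]

lemma keyF_lt {n : ℕ} (a x : Fin n) : keyF n a x < n := Nat.mod_lt _ (by have := a.2; omega)

lemma keyF_inj {n : ℕ} (a : Fin n) : Function.Injective (keyF n a) := by
  intro x y h
  rw [keyF_eq, keyF_eq] at h
  have := a.2
  have := x.2
  have := y.2
  ext
  split_ifs at h <;> omega

lemma image_count {n : ℕ} (a : Fin n) (S : Finset (Fin n)) (p : ℕ → Bool) :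
    ((S.image (keyF n a)).sort (· ≤ ·)).countP p =
      (S ∩ Finset.univ.filter (fun x => p (keyF n a x) = true)).card := by
  classical
  rw [sort_countP, Finset.filter_image, Finset.card_image_of_injective _ (keyF_inj a)]
  congr 1
  ext x
  simp

lemma gale_lt {n : ℕ} (a : Fin n) (S T : Finset (Fin n)) (h : GaleLEat n a S T) (t : ℕ) :
    (T ∩ Finset.univ.filter (fun x => keyF n a x < t)).card ≤
      (S ∩ Finset.univ.filter (fun x => keyF n a x < t)).card := by
  have := forall2_countP (fun x => decide (x < t)) (by simp; omega) _ _ h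
  rw [image_count, image_count] at this
  simpa using this

lemma gale_gt {n : ℕ} (a : Fin n) (S T : Finset (Fin n)) (h : GaleLEat n a S T) (t : ℕ) :
    (S ∩ Finset.univ.filter (fun x => n - 1 - keyF n a x < t)).card ≤
      (T ∩ Finset.univ.filter (fun x => n - 1 - keyF n a x < t)).card := by
  have := forall2_countP' (fun x => decide (n - 1 - x < t)) (by simp; omega) _ _ h
  rw [image_count, image_count] at this
  simpa using this

lemma interval1 {n : ℕ} (b : Fin n) (t : ℕ) :
    ∃ a s, ∀ x : Fin n, n - 1 - keyF n b x < t ↔ keyF n a x < s := by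
  have hb := b.2
  by_cases h0 : t = 0
  · exact ⟨b, 0, fun x => by omega⟩
  by_cases h1 : n ≤ t
  · exact ⟨b, n, fun x => by have := keyF_lt b x; omega⟩
  by_cases h2 : t ≤ b.1
  · refine ⟨⟨b.1 - t, by omega⟩, t, fun x => ?_⟩
    have := x.2
    rw [keyF_eq, keyF_eq]
    dsimp only
    split_ifs <;> omega
  · refine ⟨⟨b.1 + n - t, by omega⟩, t, fun x => ?_⟩
    have := x.2
    rw [keyF_eq, keyF_eq]
    dsimp only
    split_ifs <;> omega

lemma interval2 {n : ℕ} (b : Fin n) (t : ℕ) :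
    ∃ a s, ∀ x : Fin n, keyF n b x < t ↔ n - 1 - keyF n a x < s := by
  have hb := b.2
  by_cases h0 : t = 0
  · exact ⟨b, 0, fun x => by omega⟩
  by_cases h1 : n ≤ t
  · exact ⟨b, n, fun x => by have := keyF_lt b x; omega⟩
  by_cases h2 : b.1 + t < n
  · refine ⟨⟨b.1 + t, by omega⟩, t, fun x => ?_⟩
    have := x.2
    rw [keyF_eq, keyF_eq]
    dsimp only
    split_ifs <;> omega
  · refine ⟨⟨b.1 + t - n, by omega⟩, t, fun x => ?_⟩
    have := x.2
    rw [keyF_eq, keyF_eq]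
    dsimp only
    split_ifs <;> omega

lemma radical_le_of_primes {R : Type*} [CommRing R] (p q : R)
    (h : ∀ P : Ideal R, P.IsPrime → q ∈ P → p ∈ P) :
    (Ideal.span {p}).radical ≤ (Ideal.span {q}).radical := by
  rw [Ideal.radical_le_radical_iff, Ideal.span_singleton_le_iff_mem, Ideal.radical_eq_sInf,
    Ideal.mem_sInf]
  rintro P ⟨hP, hPp⟩
  exact h P hPp (hP (Ideal.mem_span_singleton_self q))

/-- if `M(V)` is a positroid of rank `k` and `M_V` is a minimal
representation of it, then the radical of the ideal generated by the product of the
Grassmann necklace minors equals the radical of the ideal generated by the product of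
the reverse Grassmann necklace minors. -/
theorem statement9 (k n : ℕ) (V : Fin k → Finset (Fin n))
    (hpos : IsPositroidRep k n V)
    (hmin : ∀ T : Finset (Fin k), T.Nonempty →
      (T.sup fun i => (V i).card) + T.card ≤ (T.biUnion V).card + 1)
    (I Istar : Fin n → Finset (Fin n))
    (hI : ∀ a : Fin n, NecklaceAt k n V a (I a))
    (hIstar : ∀ a : Fin n, CoNecklaceAt k n V a (Istar a)) :
    (Ideal.span {∏ a : Fin n, minorF k n V (I a)}).radical =
      (Ideal.span {∏ a : Fin n, minorF k n V (Istar a)}).radical := by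
  have hinj : ∀ b : Fin n, Function.Injective (fun x => n - 1 - keyF n b x) := by
    intro b x y hxy
    apply keyF_inj b
    have := keyF_lt b x
    have := keyF_lt b y
    dsimp only at hxy
    omega
  apply le_antisymm
  · exact radical_le_of_primes _ _ fun P hP => main_prime V I Istar (keyF n)
      (fun b x => n - 1 - keyF n b x) hinj (fun a => (hI a).1) (fun a => (hIstar a).1)
      (fun a t T hT => gale_lt a _ _ ((hI a).2 T hT) t)
      (fun a t T hT => gale_gt a _ _ ((hIstar a).2 T hT) t) interval1 P hP
  · exact radical_le_of_primes _ _ fun P hP => main_prime V Istar I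
      (fun b x => n - 1 - keyF n b x) (keyF n) keyF_inj (fun a => (hIstar a).1)
      (fun a => (hI a).1)
      (fun a t T hT => gale_gt a _ _ ((hIstar a).2 T hT) t)
      (fun a t T hT => gale_lt a _ _ ((hI a).2 T hT) t) interval2 P hP
end

section
/- Let V = (V_1,…,V_k) be subsets of {1,…,n} such that the column matroid M(V) of M_V is a positroid of rank k. Then the following are equivalent: (a) ∑_{i=1}^{k} |V_i| ≤ ∑_{i=1}^{k} |V'_i| for every tuple V' = (V'_1,…,V'_k) of subsets of {1,…,n} whose column matroid M(V') equals M(V) (i.e., M_V has the smallest number of nonzero variable entries among all variable-valued matrices representing the same positroid); (b) for every nonempty T ⊆ {1,…,k}: |∪_{i∈T} V_i| ≥ max_{i∈T}|V_i| + |T| − 1. -/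
open MvPolynomial

open Finset in
/-- rows meeting a set of columns -/
def nbr {k n : ℕ} (V : Fin k → Finset (Fin n)) (Y : Finset (Fin n)) : Finset (Fin k) :=
  univ.filter fun i => ∃ y ∈ Y, y ∈ V i

def HallP {k n : ℕ} (V : Fin k → Finset (Fin n)) (X : Finset (Fin n)) : Prop :=
  ∀ Y ⊆ X, Y.card ≤ (nbr V Y).card

open Classical in
noncomputable def rkP {n : ℕ} (P : Finset (Fin n) → Prop) (X : Finset (Fin n)) : ℕ :=
  (X.powerset.filter P).sup Finset.card

theorem le_rkP {n : ℕ} {P : Finset (Fin n) → Prop} {X B : Finset (Fin n)} (hB : P B)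
    (h : B ⊆ X) : B.card ≤ rkP P X := by
  classical
  unfold rkP
  exact Finset.le_sup (f := Finset.card) (by simp [hB, h])

theorem exists_rkP {n : ℕ} {P : Finset (Fin n) → Prop} (h0 : P ∅) (X : Finset (Fin n)) :
    ∃ B ⊆ X, P B ∧ B.card = rkP P X := by
  classical
  unfold rkP
  obtain ⟨B, hB, h⟩ := Finset.exists_mem_eq_sup (X.powerset.filter P) ⟨∅, by simp [h0]⟩ Finset.card
  simp at hB
  exact ⟨B, hB.1, hB.2, h.symm⟩

section
variable {k n : ℕ} {V : Fin k → Finset (Fin n)}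

theorem mem_nbr {Y : Finset (Fin n)} {i : Fin k} : i ∈ nbr V Y ↔ ∃ y ∈ Y, y ∈ V i := by
  simp [nbr]

theorem nbr_mono {Y Z : Finset (Fin n)} (h : Y ⊆ Z) : nbr V Y ⊆ nbr V Z := by
  intro i; simp only [mem_nbr]; rintro ⟨y, hy, hi⟩; exact ⟨y, h hy, hi⟩

theorem nbr_union (Y Z : Finset (Fin n)) : nbr V (Y ∪ Z) = nbr V Y ∪ nbr V Z := by
  ext i; simp only [mem_nbr, Finset.mem_union]; grind

theorem nbr_submod (Y Z : Finset (Fin n)) :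
    (nbr V (Y ∪ Z)).card + (nbr V (Y ∩ Z)).card ≤ (nbr V Y).card + (nbr V Z).card := by
  rw [nbr_union, ← Finset.card_union_add_card_inter (nbr V Y) (nbr V Z)]
  gcongr
  exact Finset.subset_inter (nbr_mono Finset.inter_subset_left) (nbr_mono Finset.inter_subset_right)

theorem HallP.mono {X Y : Finset (Fin n)} (h : HallP V X) (hY : Y ⊆ X) : HallP V Y :=
  fun Z hZ => h Z (hZ.trans hY)

theorem HallP.empty : HallP V ∅ := by
  intro Y hY
  simp [Finset.subset_empty.mp hY]

theorem tight_union {B T Z : Finset (Fin n)} (hB : HallP V B) (hT : T ⊆ B) (hZ : Z ⊆ B)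
    (h1 : T.card = (nbr V T).card) (h2 : Z.card = (nbr V Z).card) :
    (T ∪ Z).card = (nbr V (T ∪ Z)).card := by
  have := nbr_submod (V := V) T Z
  have h3 := hB (T ∪ Z) (Finset.union_subset hT hZ)
  have h4 := hB (T ∩ Z) (Finset.inter_subset_left.trans hT)
  have := Finset.card_union_add_card_inter T Z
  omega

theorem rk_le_formula (X Y : Finset (Fin n)) :
    rkP (HallP V) X ≤ (nbr V Y).card + (X \ Y).card := by
  obtain ⟨B, hBX, hB, hc⟩ := exists_rkP (P := HallP V) HallP.empty X
  rw [← hc]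
  have h1 := hB (B ∩ Y) Finset.inter_subset_left
  have h2 := Finset.card_le_card (nbr_mono (V := V) (Finset.inter_subset_right : B ∩ Y ⊆ Y))
  have h3 := Finset.card_le_card (Finset.sdiff_subset_sdiff hBX (Finset.Subset.refl Y))
  have h4 := Finset.card_inter_add_card_sdiff B Y
  omega

theorem rk_formula (X : Finset (Fin n)) :
    ∃ Y ⊆ X, rkP (HallP V) X = (nbr V Y).card + (X \ Y).card := by
  classical
  obtain ⟨B, hBX, hB, hc⟩ := exists_rkP (P := HallP V) HallP.empty X
  obtain ⟨T, hT, hmax⟩ := Finset.exists_max_image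
    (B.powerset.filter fun Y => Y.card = (nbr V Y).card) Finset.card ⟨∅, by rw [Finset.mem_filter]; simp [nbr]⟩
  simp only [Finset.mem_filter, Finset.mem_powerset, and_imp] at hT hmax
  obtain ⟨hTB, hTt⟩ := hT
  have key : ∀ x ∈ X \ B, nbr V {x} ⊆ nbr V T := by
    intro x hx
    rw [Finset.mem_sdiff] at hx
    have hn : ¬ HallP V (insert x B) := by
      intro h
      have := le_rkP h (Finset.insert_subset hx.1 hBX)
      rw [Finset.card_insert_of_notMem hx.2] at this
      omega
    unfold HallP at hn
    push Not at hn
    obtain ⟨Y, hY, hlt⟩ := hn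
    have hxY : x ∈ Y := by
      by_contra hxY
      have := hB Y ((Finset.subset_insert_iff_of_notMem hxY).mp hY)
      omega
    have hZB : Y.erase x ⊆ B := Finset.subset_insert_iff.mp hY
    have h1 := hB _ hZB
    have h2 := nbr_mono (V := V) (Finset.erase_subset x Y)
    have h2' := Finset.card_le_card h2
    have h3 := Finset.card_erase_add_one hxY
    have h4 : nbr V (Y.erase x) = nbr V Y := Finset.eq_of_subset_of_card_le h2 (by omega)
    have h5 := tight_union hB hTB hZB hTt (by omega)
    have h6 := hmax _ (Finset.union_subset hTB hZB) h5
    have h7 : T = T ∪ Y.erase x := Finset.eq_of_subset_of_card_le Finset.subset_union_left h6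
    calc nbr V {x} ⊆ nbr V Y := nbr_mono (by simpa using hxY)
      _ = nbr V (Y.erase x) := h4.symm
      _ ⊆ nbr V T := nbr_mono (by rw [h7]; exact Finset.subset_union_right)
  refine ⟨T ∪ (X \ B), Finset.union_subset (hTB.trans hBX) Finset.sdiff_subset, ?_⟩
  have e1 : nbr V (T ∪ (X \ B)) = nbr V T := by
    apply Finset.Subset.antisymm _ (nbr_mono Finset.subset_union_left)
    intro i hi
    rw [mem_nbr] at hi
    obtain ⟨y, hy, hyi⟩ := hi
    rcases Finset.mem_union.mp hy with h | h
    · exact mem_nbr.mpr ⟨y, h, hyi⟩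
    · exact key y h (mem_nbr.mpr ⟨y, by simp, hyi⟩)
  have e2 : X \ (T ∪ (X \ B)) = B \ T := by
    ext a; have := @hBX a; have := @hTB a; simp only [Finset.mem_sdiff, Finset.mem_union]; grind
  rw [e1, e2, ← hTt, ← hc, Finset.card_sdiff_of_subset hTB]
  have := Finset.card_le_card hTB
  omega

/-- no coloops -/
def Cyc {n : ℕ} (P : Finset (Fin n) → Prop) (X : Finset (Fin n)) : Prop :=
  ∀ e ∈ X, rkP P (X.erase e) = rkP P X

open Classical in
noncomputable def core {n : ℕ} (P : Finset (Fin n) → Prop) (X : Finset (Fin n)) : Finset (Fin n) :=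
  X.filter fun e => rkP P (X.erase e) = rkP P X

theorem core_subset {P : Finset (Fin n) → Prop} {X : Finset (Fin n)} : core P X ⊆ X :=
  Finset.filter_subset _ _

theorem rkP_mono {P : Finset (Fin n) → Prop} (h0 : P ∅) {X Y : Finset (Fin n)} (h : X ⊆ Y) :
    rkP P X ≤ rkP P Y := by
  obtain ⟨B, hB, hP, hc⟩ := exists_rkP h0 X
  rw [← hc]; exact le_rkP hP (hB.trans h)

theorem core_rk_aux {P : Finset (Fin n) → Prop} (hm : ∀ X Y, P X → Y ⊆ X → P Y)
    {X B : Finset (Fin n)} (hB : P B) (hBX : B ⊆ X) (hc : B.card = rkP P X) :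
    (B ∩ core P X).card + (X \ core P X).card = rkP P X := by
  have h1 : X \ core P X ⊆ B := by
    intro e he
    by_contra heB
    simp only [core, Finset.mem_sdiff, Finset.mem_filter, not_and] at he
    apply he.2 he.1
    have h0 : P ∅ := hm _ _ hB (Finset.empty_subset _)
    apply le_antisymm (rkP_mono h0 (Finset.erase_subset _ _))
    rw [← hc]
    exact le_rkP hB (Finset.subset_erase.mpr ⟨hBX, heB⟩)
  have h2 : X \ core P X = B \ core P X := by
    ext a; have := @h1 a; have := @hBX a; simp only [Finset.mem_sdiff] at *; grind
  rw [h2, Finset.card_inter_add_card_sdiff, hc]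


theorem core_min (X : Finset (Fin n)) :
    rkP (HallP V) X = (nbr V (core (HallP V) X)).card + (X \ core (HallP V) X).card := by
  classical
  obtain ⟨Y, hY, hmin⟩ := Finset.exists_min_image
    (X.powerset.filter fun Y => rkP (HallP V) X = (nbr V Y).card + (X \ Y).card) Finset.card
    (by obtain ⟨Y, h1, h2⟩ := rk_formula (V := V) X
        exact ⟨Y, by rw [Finset.mem_filter, Finset.mem_powerset]; exact ⟨h1, h2⟩⟩)
  simp only [Finset.mem_filter, Finset.mem_powerset, and_imp] at hY hmin
  obtain ⟨hYX, hYr⟩ := hY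
  have hCY : core (HallP V) X = Y := by
    apply Finset.Subset.antisymm
    · intro e he
      simp only [core, Finset.mem_filter] at he
      by_contra heY
      have h1 := rk_le_formula (V := V) (X.erase e) Y
      have h2 : X.erase e \ Y = (X \ Y).erase e := by
        ext a; simp only [Finset.mem_sdiff, Finset.mem_erase]; tauto
      have h3 := Finset.card_erase_add_one (Finset.mem_sdiff.mpr ⟨he.1, heY⟩)
      rw [h2] at h1
      omega
    · intro e heY
      have heX := hYX heY
      simp only [core, Finset.mem_filter]
      refine ⟨heX, ?_⟩
      by_contra hne
      have hlt : rkP (HallP V) (X.erase e) < rkP (HallP V) X :=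
        lt_of_le_of_ne (rkP_mono HallP.empty (Finset.erase_subset _ _)) hne
      obtain ⟨Z, hZ, hZr⟩ := rk_formula (V := V) (X.erase e)
      have heZ : e ∉ Z := fun h => by simpa using hZ h
      have hZX : Z ⊆ X := hZ.trans (Finset.erase_subset _ _)
      have a1 := Finset.card_sdiff_add_card_eq_card hZ
      have a2 := Finset.card_erase_add_one heX
      have a3 := Finset.card_sdiff_add_card_eq_card hYX
      have a4 := Finset.card_sdiff_add_card_eq_card (Finset.union_subset hYX hZX)
      have a5 := Finset.card_sdiff_add_card_eq_card ((Finset.inter_subset_left : Y ∩ Z ⊆ Y).trans hYX)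
      have a6 := Finset.card_union_add_card_inter Y Z
      have a7 := nbr_submod (V := V) Y Z
      have a8 := rk_le_formula (V := V) X (Y ∪ Z)
      have a9 := rk_le_formula (V := V) X (Y ∩ Z)
      have := hmin (Y ∩ Z) (Finset.inter_subset_left.trans hYX) (by omega)
      have h2 : Y ∩ Z = Y := Finset.eq_of_subset_of_card_le Finset.inter_subset_left this
      rw [← h2] at heY
      exact heZ (Finset.mem_inter.mp heY).2
  rw [hCY, hYr]

theorem core_rk (X : Finset (Fin n)) :
    rkP (HallP V) (core (HallP V) X) + (X \ core (HallP V) X).card = rkP (HallP V) X := by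
  obtain ⟨B, hBX, hB, hc⟩ := exists_rkP (P := HallP V) HallP.empty X
  have h1 := core_rk_aux (P := HallP V) (fun X Y h => HallP.mono h) hB hBX hc
  have h2 := le_rkP (hB.mono (Finset.inter_subset_left : B ∩ core (HallP V) X ⊆ B))
    Finset.inter_subset_right
  have h3 := core_min (V := V) X
  have h4 := rk_le_formula (V := V) (core (HallP V) X) (core (HallP V) X)
  simp only [Finset.sdiff_self, Finset.card_empty] at h4
  omega

theorem core_cyc (X : Finset (Fin n)) : Cyc (HallP V) (core (HallP V) X) := by
  intro e he
  have he' := he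
  simp only [core, Finset.mem_filter] at he'
  apply le_antisymm (rkP_mono HallP.empty (Finset.erase_subset _ _))
  obtain ⟨B, hBX, hB, hc⟩ := exists_rkP (P := HallP V) HallP.empty (X.erase e)
  have h1 := core_rk_aux (P := HallP V) (fun X Y h => HallP.mono h) hB (hBX.trans (Finset.erase_subset _ _))
    (hc.trans he'.2)
  have h2 := core_rk (V := V) X
  have heB : e ∉ B := fun h => by simpa using hBX h
  have h3 := le_rkP (hB.mono (Finset.inter_subset_left : B ∩ core (HallP V) X ⊆ B))
    (X := (core (HallP V) X).erase e)
    (Finset.subset_erase.mpr ⟨Finset.inter_subset_right, by simp [heB]⟩)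
  omega

theorem cyc_rk {X : Finset (Fin n)} (h : Cyc (HallP V) X) : rkP (HallP V) X = (nbr V X).card := by
  have h1 : core (HallP V) X = X := by
    simp only [core]; exact Finset.filter_true_of_mem h
  have := core_min (V := V) X
  rw [h1] at this
  simpa using this

theorem cyc_subset_core {X H : Finset (Fin n)} (h : Cyc (HallP V) X) (hXH : X ⊆ H) :
    X ⊆ core (HallP V) H := by
  intro e he
  by_contra hC
  set C := core (HallP V) H with hCdef
  have hCH : C ⊆ H := core_subset
  have h1 := core_min (V := V) H
  rw [← hCdef] at h1
  have h2 := cyc_rk h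
  have h3 := rk_le_formula (V := V) H (X ∪ C)
  have h4 := nbr_submod (V := V) X C
  have h5 := rk_le_formula (V := V) (X.erase e) (X ∩ C)
  rw [h e he] at h5
  have a1 := Finset.card_sdiff_add_card_eq_card (Finset.union_subset hXH hCH)
  have a2 := Finset.card_sdiff_add_card_eq_card hCH
  have a3 := Finset.card_union_add_card_inter X C
  have a4 := Finset.card_sdiff_add_card_eq_card
    (Finset.subset_erase.mpr ⟨Finset.inter_subset_left, by simp [hC]⟩ : X ∩ C ⊆ X.erase e)
  have a5 := Finset.card_erase_add_one he
  omega

theorem count_eq {P : Finset (Fin n) → Prop} {F G : Fin k → Finset (Fin n)}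
    (hF : ∀ i, P (F i)) (hG : ∀ i, P (G i))
    (h : ∀ X, P X → (Finset.univ.filter fun i => X ⊆ F i).card
      = (Finset.univ.filter fun i => X ⊆ G i).card) (X : Finset (Fin n)) :
    (Finset.univ.filter fun i => F i = X).card = (Finset.univ.filter fun i => G i = X).card := by
  classical
  by_cases hX : P X
  swap
  · rw [Finset.filter_false_of_mem, Finset.filter_false_of_mem]
    · rintro i - rfl; exact hX (hG i)
    · rintro i - rfl; exact hX (hF i)
  induction hm : n - X.card using Nat.strong_induction_on generalizing X with
  | _ m ih =>
    have key : ∀ F : Fin k → Finset (Fin n), (∀ i, P (F i)) →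
        (Finset.univ.filter fun i => X ⊆ F i).card = (Finset.univ.filter fun i => F i = X).card +
        ∑ Z ∈ Finset.univ.filter (fun Z => P Z ∧ X ⊂ Z), (Finset.univ.filter fun i => F i = Z).card := by
      intro F hF
      rw [Finset.card_eq_sum_card_fiberwise (f := F)
        (t := insert X (Finset.univ.filter (fun Z => P Z ∧ X ⊂ Z))), Finset.sum_insert (by simp)]
      · congr 1
        · congr 1; ext i; simp; rintro rfl; rfl
        · refine Finset.sum_congr rfl fun Z hZ => ?_
          simp at hZ
          congr 1; ext i; simp; rintro rfl; exact hZ.2.1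
      · intro i hi
        simp at hi
        simp [hF, Finset.ssubset_iff_subset_ne, hi]
        grind
    have h1 := h X hX
    rw [key F hF, key G hG] at h1
    have h2 : ∀ Z ∈ Finset.univ.filter (fun Z => P Z ∧ X ⊂ Z),
        (Finset.univ.filter fun i => F i = Z).card = (Finset.univ.filter fun i => G i = Z).card := by
      intro Z hZ
      simp at hZ
      refine ih (n - Z.card) ?_ Z hZ.1 rfl
      have := Finset.card_lt_card hZ.2
      have := Finset.card_le_univ Z
      simp at this
      omega
    rw [Finset.sum_congr rfl h2] at h1
    omega

theorem sum_eq_of_count {F G : Fin k → Finset (Fin n)} (φ : Finset (Fin n) → ℤ)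
    (h : ∀ X, (Finset.univ.filter fun i => F i = X).card = (Finset.univ.filter fun i => G i = X).card) :
    ∑ i, φ (F i) = ∑ i, φ (G i) := by
  classical
  have key : ∀ F : Fin k → Finset (Fin n), ∑ i, φ (F i) =
      ∑ X, ((Finset.univ.filter fun i => F i = X).card : ℤ) * φ X := by
    intro F
    rw [← Finset.sum_fiberwise (s := Finset.univ) (g := F)]
    refine Finset.sum_congr rfl fun X _ => ?_
    rw [Finset.sum_congr rfl (g := fun _ => φ X) (by simp; rintro i rfl; rfl)]
    simp
  rw [key F, key G]
  simp [h]

/-- nullity sum -/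
theorem null_invariant {V' : Fin k → Finset (Fin n)} (h : HallP V' = HallP V) :
    ∑ i, ((((V i)ᶜ).card : ℤ) - rkP (HallP V) (V i)ᶜ) =
    ∑ i, ((((V' i)ᶜ).card : ℤ) - rkP (HallP V) (V' i)ᶜ) := by
  have key : ∀ H, ((H.card : ℤ) - rkP (HallP V) H) =
      (((core (HallP V) H).card : ℤ) - rkP (HallP V) (core (HallP V) H)) := by
    intro H
    have h1 := core_rk (V := V) H
    have h2 := Finset.card_sdiff_add_card_eq_card (core_subset : core (HallP V) H ⊆ H)
    omega
  rw [Finset.sum_congr rfl fun i _ => key (V i)ᶜ, Finset.sum_congr rfl fun i _ => key (V' i)ᶜ]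
  refine sum_eq_of_count (F := fun i => core (HallP V) (V i)ᶜ) (G := fun i => core (HallP V) (V' i)ᶜ)
    (fun X => (X.card : ℤ) - rkP (HallP V) X) ?_
  refine count_eq (P := Cyc (HallP V)) (fun i => core_cyc _) (fun i => core_cyc _) ?_
  intro X hX
  have e : ∀ W : Fin k → Finset (Fin n), HallP W = HallP V →
      (Finset.univ.filter fun i => X ⊆ core (HallP V) (W i)ᶜ).card + rkP (HallP V) X = k := by
    intro W hW
    have hX' := hX
    rw [← hW] at hX' ⊢
    rw [cyc_rk hX']
    have : (Finset.univ.filter fun i => X ⊆ core (HallP W) (W i)ᶜ) = (nbr W X)ᶜ := by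
      ext i
      simp only [Finset.mem_filter, Finset.mem_univ, true_and, Finset.mem_compl, mem_nbr]
      constructor
      · rintro h ⟨y, hy, hyi⟩
        have := core_subset (h hy)
        simp at this
        exact this hyi
      · intro h
        apply cyc_subset_core hX'
        intro y hy
        simp
        exact fun hyi => h ⟨y, hy, hyi⟩
    rw [this]
    have := Finset.card_compl_add_card (nbr W X)
    simpa using this
  have := e V rfl
  have := e V' h
  omega

theorem b_imp_a (hb : ∀ T : Finset (Fin k), T.Nonempty →
        (T.sup fun i => (V i).card) + T.card ≤ (T.biUnion V).card + 1)
    {V' : Fin k → Finset (Fin n)} (h : HallP V' = HallP V) :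
    ∑ i : Fin k, (V i).card ≤ ∑ i : Fin k, (V' i).card := by
  have hn := null_invariant h
  have h1 : ∀ i, (k : ℤ) - 1 ≤ rkP (HallP V) (V i)ᶜ := by
    intro i
    obtain ⟨Y, hY, hr⟩ := rk_formula (V := V) (V i)ᶜ
    have hi : i ∈ (nbr V Y)ᶜ := by
      simp only [Finset.mem_compl, mem_nbr]
      rintro ⟨y, hy, hyi⟩
      have := hY hy
      simp at this
      exact this hyi
    have h1 := hb (nbr V Y)ᶜ ⟨i, hi⟩
    have h2 : (V i).card ≤ ((nbr V Y)ᶜ.sup fun i => (V i).card) :=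
      Finset.le_sup (f := fun i => (V i).card) hi
    have h3 : ((nbr V Y)ᶜ.biUnion V) ⊆ Yᶜ := by
      intro y hy
      simp only [Finset.mem_biUnion, Finset.mem_compl, mem_nbr] at hy ⊢
      obtain ⟨j, hj, hyj⟩ := hy
      exact fun h => hj ⟨y, h, hyj⟩
    have h3' := Finset.card_le_card h3
    have h4 := Finset.card_compl_add_card (nbr V Y)
    have h5 := Finset.card_compl_add_card Y
    have h6 := Finset.card_compl_add_card (V i)
    have h7 := Finset.card_sdiff_add_card_eq_card hY
    simp only [Fintype.card_fin] at h4 h5 h6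
    omega
  have h2 : ∀ i, (rkP (HallP V) (V' i)ᶜ : ℤ) ≤ (k : ℤ) - 1 := by
    intro i
    rw [← h]
    have h1 := rk_le_formula (V := V') (V' i)ᶜ (V' i)ᶜ
    simp only [Finset.sdiff_self, Finset.card_empty] at h1
    have : nbr V' (V' i)ᶜ ⊂ Finset.univ := by
      rw [Finset.ssubset_univ_iff]
      intro hh
      have : i ∈ nbr V' (V' i)ᶜ := by rw [hh]; simp
      rw [mem_nbr] at this
      simp at this
    have := Finset.card_lt_card this
    simp at this
    omega
  have e : ∀ W : Fin k → Finset (Fin n), ∀ i, ((W i).card : ℤ) = n - ((W i)ᶜ).card := by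
    intro W i
    have := Finset.card_compl_add_card (W i)
    simp only [Fintype.card_fin] at this
    omega
  zify
  have hs : ∑ i, (((V i).card : ℤ) - (n - ((((V i)ᶜ).card : ℤ) - rkP (HallP V) (V i)ᶜ) - (k - 1))) ≤ 0 :=
    Finset.sum_nonpos fun i _ => by have := h1 i; have := e V i; omega
  have hs' : 0 ≤ ∑ i, (((V' i).card : ℤ) - (n - ((((V' i)ᶜ).card : ℤ) - rkP (HallP V) (V' i)ᶜ) - (k - 1))) :=
    Finset.sum_nonneg fun i _ => by have := h2 i; have := e V' i; omega
  rw [Finset.sum_sub_distrib, Finset.sum_sub_distrib, Finset.sum_sub_distrib] at hs hs'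
  rw [hn] at hs
  linarith

theorem a_imp_b (hk : ∃ B : Finset (Fin n), HallP V B ∧ B.card = k)
    (ha : ∀ V' : Fin k → Finset (Fin n), (∀ S, HallP V' S ↔ HallP V S) →
      ∑ i : Fin k, (V i).card ≤ ∑ i : Fin k, (V' i).card)
    (T : Finset (Fin k)) (hT : T.Nonempty) :
    (T.sup fun i => (V i).card) + T.card ≤ (T.biUnion V).card + 1 := by
  classical
  by_contra hlt
  push Not at hlt
  obtain ⟨i, hiT, hi⟩ := Finset.exists_mem_eq_sup T hT fun i => (V i).card
  rw [hi] at hlt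
  -- every element of `V i` has a tight set
  have key : ∀ e ∈ V i, ∃ Z ⊆ (V i)ᶜ, HallP V Z ∧ Z.card = (nbr V Z).card ∧
      nbr V {e} ⊆ insert i (nbr V Z) := by
    intro e he
    set V' := Function.update V i ((V i).erase e) with hV'
    have hsub : ∀ j, V' j ⊆ V j := by
      intro j
      by_cases hj : j = i
      · subst hj; simp [hV', Finset.erase_subset]
      · simp [hV', hj]
    have hnb : ∀ Y, nbr V' Y ⊆ nbr V Y := by
      intro Y j
      simp only [mem_nbr]
      rintro ⟨y, hy, hyj⟩
      exact ⟨y, hy, hsub j hyj⟩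
    have hlt' : ∑ j : Fin k, (V' j).card < ∑ j : Fin k, (V j).card := by
      apply Finset.sum_lt_sum
      · intro j _; exact Finset.card_le_card (hsub j)
      · refine ⟨i, Finset.mem_univ _, ?_⟩
        simp only [hV', Function.update_self]
        exact Finset.card_erase_lt_of_mem he
    have hne : ∃ S, HallP V S ∧ ¬ HallP V' S := by
      by_contra hcon
      push Not at hcon
      have := ha V' fun S => ⟨fun h Y hY => (h Y hY).trans (Finset.card_le_card (hnb Y)), hcon S⟩
      omega
    obtain ⟨S, hS, hS'⟩ := hne
    unfold HallP at hS'
    push Not at hS'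
    obtain ⟨Y, hYS, hYlt⟩ := hS'
    have hY := hS.mono hYS
    have hYc := hY Y (Finset.Subset.refl _)
    have hoff : ∀ j ∈ nbr V Y, j ≠ i → j ∈ nbr V' Y := by
      intro j hj hji
      rw [mem_nbr] at hj ⊢
      obtain ⟨y, hy, hyj⟩ := hj
      exact ⟨y, hy, by simpa [hV', hji] using hyj⟩
    have hi1 : i ∉ nbr V' Y := by
      intro h
      have : nbr V Y ⊆ nbr V' Y := by
        intro j hj
        by_cases hji : j = i
        · rw [hji]; exact h
        · exact hoff j hj hji
      have := Finset.card_le_card this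
      omega
    have hY1 : ∀ y ∈ Y, y ∈ V i → y = e := by
      intro y hy hyi
      by_contra hye
      exact hi1 (mem_nbr.mpr ⟨y, hy, by simp [hV', hye, hyi]⟩)
    have heY : e ∈ Y := by
      by_contra heY
      have : nbr V Y ⊆ nbr V' Y := by
        intro j hj
        by_cases hji : j = i
        · rw [hji, mem_nbr] at hj
          obtain ⟨y, hy, hyi⟩ := hj
          rw [hY1 y hy hyi] at hy
          exact absurd hy heY
        · exact hoff j hj hji
      have := Finset.card_le_card this
      omega
    have hZ : Y.erase e ⊆ (V i)ᶜ := by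
      intro y hy
      rw [Finset.mem_erase] at hy
      rw [Finset.mem_compl]
      exact fun h => hy.1 (hY1 y hy.2 h)
    have hZn : nbr V (Y.erase e) ⊆ nbr V' Y := by
      intro j hj
      refine hoff j (nbr_mono (Finset.erase_subset _ _) hj) ?_
      rintro rfl
      rw [mem_nbr] at hj
      obtain ⟨y, hy, hyi⟩ := hj
      have := hZ hy
      simp at this
      exact this hyi
    have hZc := hY _ (Finset.erase_subset e Y)
    have hc1 := Finset.card_erase_add_one heY
    have hc2 := Finset.card_le_card hZn
    have heq : nbr V (Y.erase e) = nbr V' Y := Finset.eq_of_subset_of_card_le hZn (by omega)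
    refine ⟨Y.erase e, hZ, hY.mono (Finset.erase_subset _ _), by omega, ?_⟩
    intro j hj
    rw [heq, Finset.mem_insert]
    by_cases hji : j = i
    · exact Or.inl hji
    · exact Or.inr (hoff j (nbr_mono (by simpa using heY) hj) hji)
  choose! Z hZ1 hZ2 hZ3 hZ4 using key
  -- enlarge
  have hVU : V i ⊆ T.biUnion V := Finset.subset_biUnion_of_mem V hiT
  have grow : ∀ A : Finset (Fin n), A ⊆ V i → ∃ Y ⊆ (V i)ᶜ, (∀ e ∈ A, Z e ⊆ Y) ∧
      (nbr V Y).card + T.card + n ≤ k + Y.card + (T.biUnion V).card := by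
    intro A
    induction A using Finset.induction_on with
    | empty =>
      intro _
      refine ⟨(T.biUnion V)ᶜ, Finset.compl_subset_compl.mpr hVU, by simp, ?_⟩
      have h1 : nbr V (T.biUnion V)ᶜ ⊆ Tᶜ := by
        intro j hj
        rw [mem_nbr] at hj
        obtain ⟨y, hy, hyj⟩ := hj
        rw [Finset.mem_compl] at hy ⊢
        exact fun h => hy (Finset.mem_biUnion.mpr ⟨j, h, hyj⟩)
      have h2 := Finset.card_le_card h1
      have h3 := Finset.card_compl_add_card T
      have h4 := Finset.card_compl_add_card (T.biUnion V)
      simp only [Fintype.card_fin] at h3 h4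
      omega
    | insert e A heA ih =>
      intro hA
      rw [Finset.insert_subset_iff] at hA
      obtain ⟨Y, hY, hYZ, hYc⟩ := ih hA.2
      refine ⟨Y ∪ Z e, Finset.union_subset hY (hZ1 e hA.1), ?_, ?_⟩
      · intro e' he'
        rcases Finset.mem_insert.mp he' with rfl | h
        · exact Finset.subset_union_right
        · exact (hYZ e' h).trans Finset.subset_union_left
      · have h1 := nbr_submod (V := V) Y (Z e)
        have h2 := hZ2 e hA.1 (Y ∩ Z e) Finset.inter_subset_right
        have h3 := hZ3 e hA.1
        have h4 := Finset.card_union_add_card_inter Y (Z e)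
        omega
  obtain ⟨Y, hY, hYZ, hYc⟩ := grow (V i) (Finset.Subset.refl _)
  have h1 : nbr V (Y ∪ V i) ⊆ insert i (nbr V Y) := by
    intro j hj
    rw [mem_nbr] at hj
    obtain ⟨y, hy, hyj⟩ := hj
    rcases Finset.mem_union.mp hy with h | h
    · exact Finset.mem_insert_of_mem (mem_nbr.mpr ⟨y, h, hyj⟩)
    · exact Finset.insert_subset_insert i (nbr_mono (hYZ y h))
        (hZ4 y h (mem_nbr.mpr ⟨y, by simp, hyj⟩))
  have h2 := (Finset.card_le_card h1).trans (Finset.card_insert_le _ _)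
  have h3 : (Y ∪ V i).card = Y.card + (V i).card := by
    apply Finset.card_union_of_disjoint
    rw [Finset.disjoint_left]
    intro a ha
    simpa using hY ha
  obtain ⟨B, hB, hBk⟩ := hk
  have h4 := le_rkP hB (Finset.subset_univ B)
  have h5 := rk_le_formula (V := V) Finset.univ (Y ∪ V i)
  have h6 := Finset.card_sdiff_add_card_eq_card (Finset.subset_univ (Y ∪ V i))
  simp only [Finset.card_univ, Fintype.card_fin] at h6
  omega

theorem hall_of_indep {S : Finset (Fin n)} (h : ColsIndep (MV k n V) S) : HallP V S := by
  intro Y hY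
  have hYi : LinearIndependent (FF k n)
      (fun j : {x : Fin n // x ∈ Y} => fun i : Fin k => MV k n V i (j : Fin n)) :=
    h.comp (fun j : {x : Fin n // x ∈ Y} => (⟨j.1, hY j.2⟩ : {x : Fin n // x ∈ S}))
      (fun a b hab => Subtype.ext (congrArg (fun z : {x : Fin n // x ∈ S} => z.1) hab))
  have hR : LinearIndependent (FF k n)
      (fun j : {x : Fin n // x ∈ Y} => fun i : {x : Fin k // x ∈ nbr V Y} => MV k n V i.1 (j : Fin n)) := by
    rw [Fintype.linearIndependent_iff] at hYi ⊢
    intro g hg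
    apply hYi g
    ext i
    by_cases hi : i ∈ nbr V Y
    · have := congrFun hg ⟨i, hi⟩
      simpa using this
    · simp only [Finset.sum_apply, Pi.smul_apply, Pi.zero_apply, smul_eq_mul]
      apply Finset.sum_eq_zero
      intro j _
      have : (j : Fin n) ∉ V i := fun hj => hi (mem_nbr.mpr ⟨j, j.2, hj⟩)
      simp [MV, MVpoly, this]
  have := hR.fintype_card_le_finrank
  simpa using this

theorem indep_of_hall {S : Finset (Fin n)} (h : HallP V S) : ColsIndep (MV k n V) S := by
  classical
  obtain ⟨f, hf, hfm⟩ := (Finset.all_card_le_biUnion_card_iff_exists_injective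
    (fun j : {x : Fin n // x ∈ S} => Finset.univ.filter fun i : Fin k => (j : Fin n) ∈ V i)).mp (by
      intro s
      have h1 := h (s.image Subtype.val) (by intro a; simp; tauto)
      rw [Finset.card_image_of_injective _ Subtype.val_injective] at h1
      refine h1.trans (Finset.card_le_card ?_)
      intro i hi
      rw [mem_nbr] at hi
      obtain ⟨y, hy, hyi⟩ := hi
      simp only [Finset.mem_image] at hy
      obtain ⟨a, ha, rfl⟩ := hy
      simp only [Finset.mem_biUnion, Finset.mem_filter, Finset.mem_univ, true_and]
      exact ⟨a, ha, hyi⟩)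
  simp only [Finset.mem_filter, Finset.mem_univ, true_and] at hfm
  set N : Matrix {x : Fin n // x ∈ S} {x : Fin n // x ∈ S} (PR k n) :=
    (MVpoly k n V).submatrix f Subtype.val with hN
  have hdet : N.det ≠ 0 := by
    intro h0
    have h1 := congrArg (MvPolynomial.eval
      (fun p : Fin k × Fin n => if ∃ h : p.2 ∈ S, f ⟨p.2, h⟩ = p.1 then (1 : ℝ) else 0)) h0
    rw [RingHom.map_det, map_zero] at h1
    have h2 : (MvPolynomial.eval
      (fun p : Fin k × Fin n => if ∃ h : p.2 ∈ S, f ⟨p.2, h⟩ = p.1 then (1 : ℝ) else 0)).mapMatrix N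
        = 1 := by
      ext a b
      by_cases hab : a = b
      · subst hab
        simp [hN, MVpoly, hfm]
      · have : f b ≠ f a := fun h => hab (hf h).symm
        simp only [hN, MVpoly, RingHom.mapMatrix_apply, Matrix.map_apply, Matrix.submatrix_apply,
          Matrix.of_apply, Matrix.one_apply_ne hab]
        split_ifs <;> simp [this]
    rw [h2, Matrix.det_one] at h1
    exact one_ne_zero h1
  have hdet' : (N.map (algebraMap (PR k n) (FF k n))).det ≠ 0 := by
    have := RingHom.map_det (algebraMap (PR k n) (FF k n)) N
    rw [RingHom.mapMatrix_apply] at this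
    rw [← this]
    simpa using hdet
  have hli := Matrix.linearIndependent_cols_of_det_ne_zero hdet'
  unfold ColsIndep
  rw [Fintype.linearIndependent_iff] at hli ⊢
  intro g hg
  apply hli g
  ext a
  have := congrFun hg (f a)
  simpa [hN, MV, Matrix.col] using this

theorem indep_iff_hall (V : Fin k → Finset (Fin n)) (S : Finset (Fin n)) :
    ColsIndep (MV k n V) S ↔ HallP V S := ⟨hall_of_indep, indep_of_hall⟩

theorem exists_basis {A : Matrix (Fin k) (Fin n) ℝ} (hA : A.rank = k) :
    ∃ S : Finset (Fin n), ColsIndep A S ∧ S.card = k := by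
  classical
  obtain ⟨κ, a, ha, hspan, hli⟩ := exists_linearIndependent' ℝ A.col
  have : Fintype κ := Fintype.ofInjective a ha
  refine ⟨Finset.univ.image a, ?_, ?_⟩
  · have hm : ∀ j : {x : Fin n // x ∈ Finset.univ.image a}, ∃ c, a c = j := by
      rintro ⟨j, hj⟩; simpa using hj
    choose g hg using hm
    have hgi : Function.Injective g := by
      intro x y hxy
      apply Subtype.ext
      rw [← hg, ← hg, hxy]
    have := hli.comp g hgi
    unfold ColsIndep
    have he : (fun j : {x : Fin n // x ∈ Finset.univ.image a} => fun i : Fin k => A i (j : Fin n))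
        = (A.col ∘ a) ∘ g := by
      funext j
      simp only [Function.comp, hg]
      rfl
    rw [he]
    exact this
  · rw [Finset.card_image_of_injective _ ha, Finset.card_univ, ← finrank_span_eq_card hli, hspan,
      ← Matrix.rank_eq_finrank_span_cols, hA]

end

/-- if `M(V)` is a positroid of rank `k`, then `M_V` has the smallest
total number of nonzero variable entries among all variable-valued matrices with the
same column matroid iff every nonempty `T ⊆ {1,…,k}` satisfies
`|∪_{i∈T} V_i| ≥ max_{i∈T} |V_i| + |T| − 1`. -/
theorem statement11 (k n : ℕ) (V : Fin k → Finset (Fin n))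
    (hpos : IsPositroidRep k n V) :
    ((∀ V' : Fin k → Finset (Fin n),
        (∀ S : Finset (Fin n), ColsIndep (MV k n V') S ↔ ColsIndep (MV k n V) S) →
        ∑ i : Fin k, (V i).card ≤ ∑ i : Fin k, (V' i).card) ↔
      (∀ T : Finset (Fin k), T.Nonempty →
        (T.sup fun i => (V i).card) + T.card ≤ (T.biUnion V).card + 1)) := by
  simp only [indep_iff_hall]
  obtain ⟨A, hA, -, hAV⟩ := hpos
  obtain ⟨B, hB, hBk⟩ := exists_basis hA
  have hB' := (indep_iff_hall V B).mp ((hAV B).mp hB)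
  constructor
  · intro ha T hT
    exact a_imp_b ⟨B, hB', hBk⟩ ha T hT
  · intro hb V' h
    exact b_imp_a hb (funext fun S => propext (h S))
end
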